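/- (Explicit nontrivial idempotent, from the proof of Theorem 3.3) Set s_l := b_{2l−1} + b_{2l} for l = 1,…,r and S := {l ∈ {1,…,r} : t ∤ s_l}. Suppose S is nonempty and that t divides s_p + s_{p'} whenever p < p' are consecutive elements of S (i.e. no element of S lies strictly between p and p'). Let l₁ := min S; then s_{l₁} is a unit of R, and there exists an endomorphism family (φ_1,…,φ_n) with φ_m² = φ_m for all m and φ_{j_r} = [[1, 0],[−t·s_{l₁}^{−1}, 0]]. In particular this family is an idempotent endomorphism that is neither 0 nor the identity, so 𝕄(I,J) is decomposable. -/

import Mathlib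

open PowerSeries Matrix
open scoped Classical

noncomputable section

/-- `R` is the ring of formal power series `ℂ[[t]]`. -/
abbrev R : Type := PowerSeries ℂ

/-- The variable `t` of `ℂ[[t]]`. -/
noncomputable def t : R := PowerSeries.X

/-- `2 × 2` matrices over `R = ℂ[[t]]`. -/
abbrev M2 : Type := Matrix (Fin 2) (Fin 2) R

/-- Partial sums of the `s_l`. -/
def pB (b : ℕ → R) (L : ℕ) : R := ∑ l ∈ Finset.range L, (b (2 * l + 1) + b (2 * l + 2))

theorem ext_two {a b c d a' b' c' d' : R} (h1 : a = a') (h2 : b = b') (h3 : c = c')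
    (h4 : d = d') : !![a, b; c, d] = !![a', b'; c', d'] := by
  subst h1 h2 h3 h4; rfl

theorem pB_succ (b : ℕ → R) (L : ℕ) :
    pB b (L + 1) = pB b L + (b (2 * L + 1) + b (2 * L + 2)) := Finset.sum_range_succ _ _

theorem pB_eq (b : ℕ → R) (L : ℕ) : ∑ m ∈ Finset.Icc 1 (2 * L), b m = pB b L := by
  induction L with
  | zero => simp [pB]
  | succ L ih =>
    rw [pB_succ, ← ih, show 2 * (L + 1) = 2 * L + 1 + 1 by ring,
      Finset.sum_Icc_succ_top (by omega), Finset.sum_Icc_succ_top (by omega)]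
    ring

theorem isUnit_of_not_dvd (a : R) (h : ¬ t ∣ a) : IsUnit a := by
  rw [PowerSeries.isUnit_iff_constantCoeff, isUnit_iff_ne_zero]
  intro h0
  exact h (PowerSeries.X_dvd_iff.mpr h0)

theorem t_ne_zero : t ≠ 0 := PowerSeries.X_ne_zero

theorem pB_state (r : ℕ) (b : ℕ → R) (S : Finset ℕ)
    (hSdef : S = (Finset.Icc 1 r).filter (fun l => ¬ t ∣ (b (2 * l - 1) + b (2 * l))))
    (hS : S.Nonempty)
    (hcons : ∀ p ∈ S, ∀ p' ∈ S, p < p' → (∀ q ∈ S, ¬ (p < q ∧ q < p')) →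
      t ∣ (b (2 * p - 1) + b (2 * p) + (b (2 * p' - 1) + b (2 * p'))))
    (σ : R) (hσ : σ = b (2 * S.min' hS - 1) + b (2 * S.min' hS)) (L : ℕ) (hL : L ≤ r) :
    ((∀ q ∈ S, L < q) ∧ t ∣ pB b L) ∨
    ∃ p ∈ S, p ≤ L ∧ (∀ q ∈ S, ¬ (p < q ∧ q < L + 1)) ∧
      ((t ∣ pB b L ∧ t ∣ (b (2 * p - 1) + b (2 * p)) + σ) ∨
       (t ∣ pB b L - σ ∧ t ∣ (b (2 * p - 1) + b (2 * p)) - σ)) := by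
  induction L with
  | zero =>
    left
    refine ⟨fun q hq => ?_, by simp [pB]⟩
    rw [hSdef] at hq
    simp only [Finset.mem_filter, Finset.mem_Icc] at hq
    omega
  | succ L ih =>
    have hs : b (2 * (L + 1) - 1) + b (2 * (L + 1)) = b (2 * L + 1) + b (2 * L + 2) := by
      rw [show 2 * (L + 1) - 1 = 2 * L + 1 by omega, show 2 * (L + 1) = 2 * L + 2 by omega]
    rw [pB_succ]
    by_cases hmem : L + 1 ∈ S
    · right
      refine ⟨L + 1, hmem, le_rfl, fun q _ h => by omega, ?_⟩
      rw [hs]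
      rcases ih (by omega) with ⟨h1, h2⟩ | ⟨p, hp, hpL, hq, h⟩
      · right
        have hmin : S.min' hS = L + 1 := by
          apply le_antisymm (Finset.min'_le _ _ hmem)
          exact h1 _ (Finset.min'_mem _ _)
        have : σ = b (2 * L + 1) + b (2 * L + 2) := by rw [hσ, hmin, hs]
        rw [this]
        simpa using h2
      · have hc := hcons p hp (L + 1) hmem (by omega) hq
        rw [hs] at hc
        rcases h with ⟨h1, h2⟩ | ⟨h1, h2⟩
        · right
          have h3 := dvd_sub hc h2
          refine ⟨?_, ?_⟩
          · convert dvd_add h1 h3 using 1; ring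
          · convert h3 using 1; ring
        · left
          have h3 := dvd_sub hc h2
          refine ⟨?_, ?_⟩
          · convert dvd_add h1 h3 using 1; ring
          · convert h3 using 1; ring
    · have hd : t ∣ b (2 * L + 1) + b (2 * L + 2) := by
        by_contra hnd
        apply hmem
        rw [hSdef]
        simp only [Finset.mem_filter, Finset.mem_Icc]
        rw [hs]
        exact ⟨⟨by omega, hL⟩, hnd⟩
      rcases ih (by omega) with ⟨h1, h2⟩ | ⟨p, hp, hpL, hq, h⟩
      · left
        refine ⟨fun q hq => ?_, dvd_add h2 hd⟩
        have := h1 q hq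
        have : q ≠ L + 1 := fun h => hmem (h ▸ hq)
        omega
      · right
        refine ⟨p, hp, by omega, fun q hqS hh => ?_, ?_⟩
        · have := hq q hqS
          have : q ≠ L + 1 := fun h => hmem (h ▸ hqS)
          omega
        · rcases h with ⟨h1, h2⟩ | ⟨h1, h2⟩
          · exact Or.inl ⟨dvd_add h1 hd, h2⟩
          · refine Or.inr ⟨?_, h2⟩
            convert dvd_add h1 hd using 1; ring

/-- State of the position `m`: which matrix may stand at vertex `m`. -/
def St (r : ℕ) (i j : ℕ → ℕ) (b : ℕ → R) (c : R) (m : ℕ) (M : M2) : Prop :=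
  (∃ L, L ≤ r ∧ (∀ l, l < L → j l ≤ m) ∧ (∀ l, L ≤ l → l < r → m < i l) ∧
    ∃ q, t * q = pB b L * (1 - c * pB b L) ∧
      M = !![1 - c * pB b L, -q; -(t * c), c * pB b L]) ∨
  (∃ L, L < r ∧ (∀ l, l < L → j l ≤ m) ∧ i L ≤ m ∧ m < j L ∧
    (∀ l, L < l → l < r → m < i l) ∧
    ∃ D, D = pB b L + b (2 * L + 1) ∧
      M = !![1 - c * D, -(D * (1 - c * D)); -c, c * D])

theorem St_idem {r : ℕ} {i j : ℕ → ℕ} {b : ℕ → R} {c : R} {m : ℕ} {M : M2}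
    (h : St r i j b c m M) : M * M = M := by
  rcases h with ⟨L, -, -, -, q, hq, rfl⟩ | ⟨L, -, -, -, -, -, D, -, rfl⟩
  · rw [Matrix.mul_fin_two]
    apply ext_two
    · linear_combination c * hq
    · ring
    · ring
    · linear_combination c * hq
  · rw [Matrix.mul_fin_two]
    apply ext_two <;> ring

theorem St_zero {r : ℕ} {i j : ℕ → ℕ} {b : ℕ → R} {c : R} {m : ℕ} {M : M2}
    (hm : m = 0 ∨ ∀ l, l < r → j l ≤ m)
    (hij : ∀ l, l < r → i l < j l) (hi : ∀ l, l < r → 1 ≤ i l)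
    (hB : pB b r = 0) (h : St r i j b c m M) : M = !![1, 0; -(t * c), 0] := by
  rcases h with ⟨L, hLr, h1, h2, q, hq, rfl⟩ | ⟨L, hL, h1, h2, h3, h4, D, -, rfl⟩
  · have h0 : pB b L = 0 := by
      rcases hm with rfl | hm
      · have : L = 0 := by
          by_contra hne
          have a1 := h1 0 (by omega)
          have a2 := hij 0 (by omega)
          omega
        subst this
        simp [pB]
      · have : L = r := by
          by_contra hne
          have a1 := h2 L le_rfl (by omega)
          have a2 := hij L (by omega)
          have a3 := hm L (by omega)
          omega
        rw [this, hB]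
    rw [h0] at hq ⊢
    have : q = 0 := by
      rw [zero_mul] at hq
      exact (mul_eq_zero.mp hq).resolve_left t_ne_zero
    simp [this]
  · exfalso
    have a1 := hi L hL
    rcases hm with rfl | hm
    · omega
    · have := hm L hL
      omega

theorem St_step {n r : ℕ} {i j : ℕ → ℕ}
    (hij : ∀ l, l < r → i l < j l)
    (hmono : ∀ l l', l < l' → l' < r → j l < i l')
    {P : Finset ℕ}
    {b : ℕ → R} {c : R}
    {x : ZMod n → M2}
    (hxI : ∀ l, l < r → x ((i l : ZMod n)) = !![t, b (2 * l + 1); 0, 1])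
    (hxJ : ∀ l, l < r → x ((j l : ZMod n)) = !![1, b (2 * l + 2); 0, t])
    (hxP : ∀ m ∈ P, x ((m : ZMod n)) = 1)
    (hxO : ∀ m ∈ Finset.Icc 1 n, m ∉ P → (∀ l, l < r → m ≠ i l ∧ m ≠ j l) →
      x ((m : ZMod n)) = t • (1 : M2))
    (hdiv : ∀ L, L ≤ r → t ∣ pB b L * (1 - c * pB b L))
    (v : ℕ) (hv : v < n) (M : M2) (h : St r i j b c v M) :
    ∃ M' : M2, St r i j b c (v + 1) M' ∧
      x ((v + 1 : ℕ) : ZMod n) * M = M' * x ((v + 1 : ℕ) : ZMod n) := by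
  have hscal : (∀ l, l < r → v + 1 ≠ i l ∧ v + 1 ≠ j l) →
      x ((v + 1 : ℕ) : ZMod n) * M = M * x ((v + 1 : ℕ) : ZMod n) := by
    intro hne
    by_cases hmP : v + 1 ∈ P
    · rw [hxP _ hmP]; simp
    · rw [hxO _ (Finset.mem_Icc.mpr ⟨by omega, by omega⟩) hmP hne]; simp
  rcases h with ⟨L, hLr, h1, h2, q, hq, hM⟩ | ⟨L, hL, h1, h2, h3, h4, D, hD, hM⟩
  · by_cases hi : L < r ∧ v + 1 = i L
    · obtain ⟨hL, hi⟩ := hi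
      refine ⟨_, Or.inr ⟨L, hL, fun l hl => (h1 l hl).trans (by omega), by omega,
        by have := hij L hL; omega, fun l hl hlr => ?_, _, rfl, rfl⟩, ?_⟩
      · have a1 := hmono L l hl hlr
        have a2 := hij L hL
        omega
      · rw [hi, hxI L hL, hM, Matrix.mul_fin_two, Matrix.mul_fin_two]
        apply ext_two
        · ring
        · linear_combination (-1 : R) * hq
        · ring
        · ring
    · have hgt : ∀ l, L ≤ l → l < r → v + 1 < i l := by
        intro l hl hlr
        rcases hl.eq_or_lt with rfl | hl
        · have := h2 L le_rfl hlr
          have : v + 1 ≠ i L := fun e => hi ⟨hlr, e⟩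
          omega
        · have a1 := hmono L l hl hlr
          have a2 := hij L (by omega)
          have := h2 L le_rfl (by omega)
          omega
      refine ⟨M, Or.inl ⟨L, hLr, fun l hl => (h1 l hl).trans (by omega), hgt, q, hq, hM⟩,
        hscal fun l hl => ?_⟩
      have a := hij l hl
      by_cases hlL : l < L
      · have := h1 l hlL
        omega
      · have := hgt l (by omega) hl
        omega
  · by_cases hj : v + 1 = j L
    · obtain ⟨q, hq⟩ := hdiv (L + 1) (by omega)
      refine ⟨_, Or.inl ⟨L + 1, by omega, fun l hl => ?_, fun l hl hlr => ?_, q, hq.symm, rfl⟩, ?_⟩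
      · rcases (Nat.lt_succ_iff.mp hl).eq_or_lt with rfl | hl
        · omega
        · have := h1 l hl
          omega
      · have := hmono L l (by omega) hlr
        omega
      · rw [pB_succ] at *
        rw [hj, hxJ L hL, hM, Matrix.mul_fin_two, Matrix.mul_fin_two]
        subst hD
        apply ext_two
        · ring
        · linear_combination (-1 : R) * hq
        · ring
        · ring
    · have hgt : ∀ l, L < l → l < r → v + 1 < i l := by
        intro l hl hlr
        have := hmono L l hl hlr
        omega
      refine ⟨M, Or.inr ⟨L, hL, fun l hl => (h1 l hl).trans (by omega), by omega, by omega,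
        hgt, D, hD, hM⟩, hscal fun l hl => ?_⟩
      have a := hij l hl
      rcases lt_trichotomy l L with hlL | rfl | hlL
      · have := h1 l hlL
        omega
      · omega
      · have := hgt l hlL hl
        omega

/-- (Explicit nontrivial idempotent, from the proof of Theorem 3.3.)
With `s_l := b_{2l−1} + b_{2l}` (`1`-indexed) and `S := {l ∈ {1,…,r} : t ∤ s_l}`,
assume `S ≠ ∅` and that `t ∣ s_p + s_{p'}` for all consecutive `p < p'` in `S`.
Then `s_{l₁}` is a unit for `l₁ := min S`, and there is an idempotent endomorphism
family `(φ_1,…,φ_n)` with `φ_{j_r} = [[1, 0],[−t·s_{l₁}⁻¹, 0]]`; in particular `φ`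
is neither `0` nor the identity, so `𝕄(I,J)` is decomposable.
Here `i, j : ℕ → ℕ` are `0`-indexed, so `i l, j l` for `l < r` are the paper's
`i_{l+1}, j_{l+1}`, and `b (2*l+1), b (2*l+2)` are the paper's `b_{2(l+1)-1}, b_{2(l+1)}`. -/
theorem stmt5
    (n k r : ℕ) (hn : 6 ≤ n) (hr2 : 2 ≤ r) (hrk : r ≤ k) (hkrn : k + r ≤ n)
    (i j : ℕ → ℕ)
    (hi1 : 1 ≤ i 0) (hjr : j (r - 1) ≤ n)
    (hij : ∀ l, l < r → i l < j l)
    (hji : ∀ l, l + 1 < r → j l < i (l + 1))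
    (P : Finset ℕ) (hP : P ⊆ Finset.Icc 1 n)
    (hPcard : P.card = k - r)
    (hPdisj : ∀ l, l < r → i l ∉ P ∧ j l ∉ P)
    (b : ℕ → R) (hb : ∑ m ∈ Finset.Icc 1 (2 * r), b m = 0)
    (x : ZMod n → M2)
    (hxI : ∀ l, l < r → x ((i l : ZMod n)) = !![t, b (2 * l + 1); 0, 1])
    (hxJ : ∀ l, l < r → x ((j l : ZMod n)) = !![1, b (2 * l + 2); 0, t])
    (hxP : ∀ m ∈ P, x ((m : ZMod n)) = 1)
    (hxO : ∀ m ∈ Finset.Icc 1 n, m ∉ P → (∀ l, l < r → m ≠ i l ∧ m ≠ j l) →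
      x ((m : ZMod n)) = t • (1 : M2))
    (S : Finset ℕ)
    (hSdef : S = (Finset.Icc 1 r).filter (fun l => ¬ t ∣ (b (2 * l - 1) + b (2 * l))))
    (hS : S.Nonempty)
    (hcons : ∀ p ∈ S, ∀ p' ∈ S, p < p' → (∀ q ∈ S, ¬ (p < q ∧ q < p')) →
      t ∣ (b (2 * p - 1) + b (2 * p) + (b (2 * p' - 1) + b (2 * p')))) :
    IsUnit (b (2 * S.min' hS - 1) + b (2 * S.min' hS)) ∧
    ∃ φ : ZMod n → M2,
      (∀ m : ZMod n, x m * φ (m - 1) = φ m * x m) ∧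
      (∀ m : ZMod n, φ m * φ m = φ m) ∧
      φ ((j (r - 1) : ZMod n)) =
        !![1, 0; -(t * Ring.inverse (b (2 * S.min' hS - 1) + b (2 * S.min' hS))), 0] ∧
      (∃ m : ZMod n, φ m ≠ 0) ∧ (∃ m : ZMod n, φ m ≠ 1) := by
  have hmono : ∀ l l', l < l' → l' < r → j l < i l' := by
    intro l l' hl
    induction l', hl using Nat.le_induction with
    | base => exact fun h => hji l h
    | succ m hm ih =>
      intro h
      have a1 := ih (by omega)
      have a2 := hij m (by omega)
      have a3 := hji m h
      omega
  have hipos : ∀ l, l < r → 1 ≤ i l := by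
    intro l hl
    rcases Nat.eq_zero_or_pos l with rfl | h0
    · exact hi1
    · have := hmono 0 l h0 hl
      omega
  have hjmax : ∀ l, l < r → j l ≤ j (r - 1) := by
    intro l hl
    rcases (show l ≤ r - 1 by omega).eq_or_lt with rfl | h0
    · exact le_rfl
    · have := hmono l (r - 1) h0 (by omega)
      have := hij (r - 1) (by omega)
      omega
  have hunit : IsUnit (b (2 * S.min' hS - 1) + b (2 * S.min' hS)) := by
    have hm := Finset.min'_mem S hS
    have hm2 : S.min' hS ∈ (Finset.Icc 1 r).filter
        (fun l => ¬ t ∣ (b (2 * l - 1) + b (2 * l))) := by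
      rw [← hSdef]; exact hm
    exact isUnit_of_not_dvd _ (Finset.mem_filter.mp hm2).2
  refine ⟨hunit, ?_⟩
  have hstate := pB_state r b S hSdef hS hcons _ rfl
  generalize b (2 * S.min' hS - 1) + b (2 * S.min' hS) = σ at hunit hstate ⊢
  have hc : Ring.inverse σ * σ = 1 := Ring.inverse_mul_cancel _ hunit
  generalize Ring.inverse σ = c at hc ⊢
  have hdiv : ∀ L, L ≤ r → t ∣ pB b L * (1 - c * pB b L) := by
    intro L hL
    have key : t ∣ pB b L ∨ t ∣ pB b L - σ := by
      rcases hstate L hL with ⟨-, h⟩ | ⟨p, -, -, -, ⟨h, -⟩ | ⟨h, -⟩⟩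
      · exact Or.inl h
      · exact Or.inl h
      · exact Or.inr h
    rcases key with h | h
    · exact h.mul_right _
    · apply Dvd.dvd.mul_left
      have : 1 - c * pB b L = (pB b L - σ) * (-c) := by linear_combination (-1 : R) * hc
      rw [this]
      exact h.mul_right _
  have hBr : pB b r = 0 := by rw [← pB_eq, hb]
  have hstep : ∀ (v : ℕ) (M : M2), ∃ M' : M2, v < n → St r i j b c v M →
      (St r i j b c (v + 1) M' ∧
      x ((v + 1 : ℕ) : ZMod n) * M = M' * x ((v + 1 : ℕ) : ZMod n)) := by
    intro v M
    by_cases h : v < n ∧ St r i j b c v M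
    · obtain ⟨M', hM'⟩ := St_step hij hmono hxI hxJ hxP hxO hdiv v h.1 M h.2
      exact ⟨M', fun _ _ => hM'⟩
    · exact ⟨0, fun h1 h2 => absurd ⟨h1, h2⟩ h⟩
  choose g hg using hstep
  let ψ : ℕ → M2 := fun m => Nat.rec (!![1, 0; -(t * c), 0] : M2) (fun v M => g v M) m
  have hψs : ∀ v, ψ (v + 1) = g v (ψ v) := fun v => rfl
  have hψ0 : ψ 0 = !![1, 0; -(t * c), 0] := rfl
  have hSt : ∀ v, v ≤ n → St r i j b c v (ψ v) := by
    intro v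
    induction v with
    | zero =>
      intro _
      refine Or.inl ⟨0, by omega, fun l hl => by omega, fun l _ hl => hipos l hl, 0, ?_, ?_⟩
      · simp [pB]
      · rw [hψ0]; simp [pB]
    | succ v ih =>
      intro hv
      rw [hψs]
      exact (hg v (ψ v) (by omega) (ih (by omega))).1
  have hcomm : ∀ v, v < n → x ((v + 1 : ℕ) : ZMod n) * ψ v = ψ (v + 1) * x ((v + 1 : ℕ) : ZMod n) := by
    intro v hv
    rw [hψs]
    exact (hg v (ψ v) hv (hSt v hv.le)).2
  have hψn : ψ n = ψ 0 :=
    St_zero (Or.inr fun l hl => (hjmax l hl).trans hjr) hij hipos hBr (hSt n le_rfl)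
  have hψj : ψ (j (r - 1)) = ψ 0 :=
    St_zero (Or.inr hjmax) hij hipos hBr (hSt _ hjr)
  have : NeZero n := ⟨by omega⟩
  have hval : ∀ v, v ≤ n → ψ ((v : ZMod n).val) = ψ v := by
    intro v hv
    rcases hv.eq_or_lt with rfl | h
    · rw [ZMod.natCast_self, ZMod.val_zero, hψn]
    · rw [ZMod.val_natCast_of_lt h]
  have hfin : ψ ((j (r - 1) : ZMod n).val) = !![1, 0; -(t * c), 0] := by
    rw [hval _ hjr, hψj, hψ0]
  refine ⟨fun m => ψ m.val, ?_, fun m => St_idem (hSt _ (ZMod.val_lt m).le), hfin,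
    ⟨(j (r - 1) : ZMod n), fun h => ?_⟩, ⟨(j (r - 1) : ZMod n), fun h => ?_⟩⟩
  · intro m
    have hlt := ZMod.val_lt (m - 1)
    have hm : m = (((m - 1).val + 1 : ℕ) : ZMod n) := by
      rw [Nat.cast_add, ZMod.natCast_zmod_val]; simp
    have h1 := hcomm _ hlt
    rw [← hval _ hlt, ← hm] at h1
    exact h1
  · have := congrFun (congrFun (hfin.symm.trans h) 0) 0
    simp at this
  · have := congrFun (congrFun (hfin.symm.trans h) 1) 1
    simp at this

end
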